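/- arXiv:math/0202173 — 2 statements merged into one kernel-verified Lean document; each statement's English description precedes it below -/
import Mathlib

section
/- In the polynomial ring ℂ[x0,x1,x2,x3], let K = x0²x1 + x0x1x2 + x0x2² + x2³ + x0x1x3 and F = x0⁵ + x1x2⁴ + x2x1⁴ + x3⁵ + x1²x2³ + x0x3·K. Let I be the ideal generated by x0·∂F/∂x0, ∂F/∂x1, ∂F/∂x2, x3·∂F/∂x3, and let J be the ideal generated by x2³x0x3K, x1x2²x0x3K, x1²x2x0x3K, x0²x3K, x0x3²K, x1²x2³x0, x1²x2³x3. Then every homogeneous polynomial of total degree at most 8 lying in I ∩ J is zero. -/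
open MvPolynomial

/-- If `S` consists of homogeneous polynomials and a submodule `W` contains every product of degree
`n` of a monomial with an element of `S`, then `W` contains the homogeneous component of degree `n`
of every element of the ideal generated by `S`. -/
theorem homogeneousComponent_mem_of_mem_ideal_span {σ R : Type*} [CommSemiring R]
    {S : Set (MvPolynomial σ R)} {W : Submodule R (MvPolynomial σ R)} {n : ℕ}
    (hS : ∀ g ∈ S, ∃ k, g.IsHomogeneous k ∧
      ∀ s : σ →₀ ℕ, s.degree + k = n → monomial s 1 * g ∈ W)
    {f : MvPolynomial σ R} (hf : f ∈ Ideal.span S) : homogeneousComponent n f ∈ W := by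
  suffices h : ∀ p, homogeneousComponent n (p * f) ∈ W by simpa using h 1
  induction hf using Submodule.span_induction with
  | zero => simp
  | add x y _ _ hx hy => exact fun p => by rw [mul_add, map_add]; exact W.add_mem (hx p) (hy p)
  | smul a x _ hx => exact fun p => by rw [smul_eq_mul, ← mul_assoc]; exact hx _
  | mem g hg =>
    obtain ⟨k, hk, hW⟩ := hS g hg
    intro p
    induction p using MvPolynomial.induction_on' with
    | add p q hp hq => rw [add_mul, map_add]; exact W.add_mem hp hq
    | monomial s z =>
      have hz : monomial s z = z • monomial s (1 : R) := by simp [smul_monomial]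
      rw [hz, smul_mul_assoc, map_smul]
      refine W.smul_mem z ?_
      rw [homogeneousComponent_of_mem ((isHomogeneous_monomial (1 : R) rfl).mul hk)]
      split_ifs with h
      · exact hW s h.symm
      · exact W.zero_mem

/-- Exponents `(a, b, c, d)` of monomials in four variables. -/
abbrev Exponent := ℕ × ℕ × ℕ × ℕ

namespace Exponent

/-- The total degree of an exponent. -/
def degree (e : Exponent) : ℕ := e.1 + e.2.1 + e.2.2.1 + e.2.2.2

/-- An exponent as a finitely supported function. -/
noncomputable def toFinsupp (e : Exponent) : Fin 4 →₀ ℕ :=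
  Finsupp.equivFunOnFinite.symm ![e.1, e.2.1, e.2.2.1, e.2.2.2]

theorem toFinsupp_add (e e' : Exponent) : (e + e').toFinsupp = e.toFinsupp + e'.toFinsupp := by
  ext i
  fin_cases i <;> rfl

theorem toFinsupp_degree (e : Exponent) : e.toFinsupp.degree = e.degree := by
  simp [Finsupp.degree_eq_sum, Fin.sum_univ_four, toFinsupp, degree]

theorem exists_toFinsupp_eq (s : Fin 4 →₀ ℕ) : ∃ e : Exponent, e.toFinsupp = s :=
  ⟨(s 0, s 1, s 2, s 3), by ext i; fin_cases i <;> rfl⟩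

theorem monomial_toFinsupp (e : Exponent) (z : ℂ) :
    monomial e.toFinsupp z =
      C z * X 0 ^ e.1 * X 1 ^ e.2.1 * X 2 ^ e.2.2.1 * X 3 ^ e.2.2.2 := by
  rw [monomial_eq, Finsupp.prod_fintype _ _ (by simp), Fin.prod_univ_four]
  simp [toFinsupp, mul_assoc]

/-- A property of the exponents of degree `n`, in a form suited to evaluation. -/
theorem forall_of_degree_eq {n : ℕ} {P : Exponent → Prop}
    (h : ∀ a < n + 1, ∀ b < n + 1 - a, ∀ c < n + 1 - a - b, P (a, b, c, n - a - b - c))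
    (e : Exponent) (he : e.degree = n) : P e := by
  obtain ⟨a, b, c, d⟩ := e
  simp only [degree] at he
  have hd : d = n - a - b - c := by omega
  rw [hd]
  exact h a (by omega) b (by omega) c (by omega)

end Exponent

/-- A polynomial with integer coefficients as a list of terms. -/
abbrev TermList := List (ℤ × Exponent)

namespace TermList

/-- The complex polynomial with the given terms. -/
noncomputable def toPoly (l : TermList) : MvPolynomial (Fin 4) ℂ :=
  (l.map fun t => monomial t.2.toFinsupp (t.1 : ℂ)).sum

theorem isHomogeneous_toPoly {k : ℕ} {l : TermList} (h : ∀ t ∈ l, t.2.degree = k) :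
    l.toPoly.IsHomogeneous k := by
  induction l with
  | nil => exact isHomogeneous_zero _ _ _
  | cons t l ih =>
    simp only [List.mem_cons, forall_eq_or_imp] at h
    exact (isHomogeneous_monomial _ (t.2.toFinsupp_degree.trans h.1)).add (ih h.2)

end TermList

/-- The position of the monomial `x0 ^ a * x1 ^ b * x2 ^ c * x3 ^ (8 - a - b - c)` in an enumeration
of the monomials of degree 8. -/
def Exponent.rank (e : Exponent) : ℕ :=
  (e.1 + e.2.1 + e.2.2.1) * (e.1 + e.2.1 + e.2.2.1 + 1) * (e.1 + e.2.1 + e.2.2.1 + 2) / 6 +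
    (e.2.1 + e.2.2.1) * (e.2.1 + e.2.2.1 + 1) / 2 + e.2.2.1

/-- Integral linear forms on polynomials of degree 8. Each of them is encoded by the numeral whose
digit of weight `100 ^ k` in base 100 is 50 plus the value at the monomial of rank `k`. -/
def dualTable : List ℕ :=
  [515352484951515264494950485051495154445052535145574554515143505050535053514954485146515452555352505049496948495250474756454952504940585352494850474052544949464651545548504849524753544642364845445144535158554648534948415159504846495555524847384750485560496255505050515049445050504350574656465352495349484750515153505046494950474651,
   604156525147495146595250484851535545585050455763565548494844505350505051495150495350486047614754485051496554435052495158534946485268434960535045543846505349415651555650504549454951564547395445464949575352454455354748525162464644495053544954424748625153556648485150495050425050504064515248465152515049505149585051524645515046495248,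
   554758504948475150405352524648474747534848495146495742485152525149534955524349465141494649464156525047474047425250535041504848545156454652594549625157485246535045484842505354495343485448555647505155525149525841554453365159524743485659434151564953575950443658474950515149424850504157455061635352474849514652474949514750524645514151,
   445348504751535144365344525255453556544450495560565056454342494646494945515350485543475541605054465051494152515052525348455152524841565746435042514663565144515952485058484950464545565353614955504949524340583860465756605048504947504142485551554460514838485037415050515150475150505756385556544750515051544646524654484754545452565246,
   444645525152524636495044505050527653534450525045544850485245495051485242515647444454494553625250485052514655504652524850555552454848495549445152535346505052504555505254525046484654584646495250424962505454523948515849545047465055505248495153404450474848535852535152524851575550505048555646414652534646465150475152505150475254495451,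
   494652504951505249434946525251484453504652514940455752474752504948534948535054465049514750475552484849535156475250515258465148514750615448484639504957524853505545584552485048554151545246465249485348514749474856525148455050484849495545475244485359445142394961435152505051434750506156624954464952495249505148485251475252554548464848,
   595152484951505154595252484847536954534846485268455144515453505049514951514753504452474651575248505251484948495250494652494952514849455152514352575146534851494748525046544950494755524447485349445254484461475154504750495057484748516253494653385143555553535151534950505150485050503958506149375152485052455148485051514949484946505152,
   544556504947525751654552505053455439564850445250555546484944505049495049495360485838435046435548485053526448475252495258574548495254474956494245574560525449455749494946525048444351525053445253524635534535615261504646604859484748485551494955505157374547515944534951525150374950505061505142464950525750574345505051495349535045485652,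
   445048505050495252675046485254542745505254564949455856514760515352495048484854505359655558435046545046496652505048485157485450515253565448524640403945444553514854545152464351525454425049415246545144455655355537524049425051464851505146555148445653645665434552465048484750455450506052563749615048495348495759525546474846515246484748,
   394456545046485053524050545250504040575052505250445556514955515252495048525246485456585857535156464646526146465050495241624442525856505252485039444840504644425254445448485045474846525352344548585450635642544953465039534953524648494551434853534968465049544348515049524850424950505352545545495050504846545253545751444847505050445250,
   404350534948505450465144505055475745504650535552474448535754505153465041495157465543495557555248485049494454454652544932575352495242445550473762534059464546514760485050505244464153525150496153505350465346564748485640535152544647495650415050424664475546603847494950524851414950505550505650344550505247524650525450444950465552465250,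
   535045485151544950555240525456484555555054505149545964414042514749494948455850465551595953755954424855535156535252474741445850454847665446405621404557565745514654535456524947494052564947474544594947465841514248485750545057544646504451544750483942504249676152555049514851445150504150435747555045535146535154545457544751455254535352,
   505946504951514740375748524848495662594846475254555650464740495150495151495144504645504851554446525255454445555050504752465050525053455250495442545463485746534550505042545456496751484450504151504757544952444646524854504955544948505258484150545628734550585250575049505049525350503544405853605149514651485052485046584352465050544954,
   505556484748534956494950465054604934464658534841484750515149495050474955485245485468475250595250485052524943465454504542444850525337595456444551464020525452494757535546505052505356524450504543505063595146503950545348574947485450505252524652415450445145586042475051514950585050504554384853625550504449525648505050515251485450525348,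
   565358484749495360555352485049524458535248474642515352464550524747544857514453544653504444574660484849523544435652525061434948544845524954543941476141545651535544384650505250494743545448535145485456544741494952565252415152484747505247444949545059455938434259415149505249435150505758485060605552464953515150464852515154554548514448,
   495148505050485359385548505048505049465050534836504748535054515251524950484656524451504747654352505049525252505048495140465450524952495048544259485649464953515048535042525457505547465047465449545247445156475445494758385152565245505557514449515342435858453747505049505150605150503039395668535048485351465151494647525348515151554051,
   584848505050515255595446465054525271495446485166524748515447505052485146465255505346494854524752525048496252505050504776525450495042445258484355523562504954504355575448464952485248524952505050444949505053364250615049535159544647495055484950464955675650485247575050514950344650504955494843454850515250495250475150494750485349495355,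
   505050505050505050724852485248524840565252504632465456494659505050505050505050564456585052505050505050505050505050505050505050505050505050505040406040505050505050435550504850505050505050505050505050505050505050505050505151504949504450525153505050505050505050505047495051504950504753505050505050505052485254505250505050505050505050,
   505050505050505050505050505050505050505050505050505050505050505050505050505050505050505050505050505050505350505050505050505050505050505050505050505050505050505050555050505050475050504950535050505050505050505050505050505146485252495050514954505050505050505050505050505050605150504550505450505050505050505050505050505050505050505049,
   505050505050505050505050505050505050505050505050425247515159505050505050505050505050505050505050505050505050505050505050505050505050505050505050505050505050505050505050505050505050505050505050505050505050505050505050505050505050505050505050505050505050505050505050505050505050505050505050505050505050505050505050505050505050505050,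
   505050505050505050305050505050505066385247525156503844565656505050505050505050505050425046505050505050505050505050505050505050505050505050505070505050505050505050505050505050505050505050505050505050505050505050505050505050505150505050505150505050505050505050505052505150504950505050505050505050505050505046504650505050505050505050,
   414552505150504749694054485050503949424952525250475242555354505354505049525044455250455450504048545451455251484850484954564852495155564850526056534644465348454850494752544548495949464551525751464750475154565746453851495346485252485550554954504640554967575747535051525050604750504256515741434952514847504848534948544943475144515149,
   504648515050504940445642505453512838505252505170454652535060504948514846475249545158525748424862504844494556485250484835485845505164505251504750444137564845484852445146505352433836505954475648544956444854514854544754484755485048504760444252624054585654484140515049495049555450503651445754604848514852485350524856504648505449524650,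
   575944485051495156374954504947526249424846525054503744565954514647515050474754514654434448525744485251503047635246455060484550535254495150514067555742584449514949494548545146505353465150513657565252494151515855544346535345505252485451465046574949453657514946495151505151554650505249605252444946485153495145464853475151495047465050,
   554247505351504746735048455250555445455254504645435148525256515151495148465349504660494853435350525048505860495050494749505848454857544657515151504626504752494450535146525052414252524849545748444858425059544854584854525152465150505753514757444951465251455846505050525050555150504157465251474850524850455248485051495249495247525150,
   365842505054514453445442545050455764584846524957515654464750505150494946525143464543594455584258524846504944544851504846525654474734485640475840485769485150554352445154484951495642505251524846485261445853504839575054454755524651524148525450584653505253485055574850514850415550505246455046455050504546474857455250515051485152534855,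
   535050505050475341445353504848503863465244485373514544505746514847534951504453515047454651454952505047534950505048535048505050534765434550565561615057524457555245564554485146484545485651515455505336464355415653415243415346505151494847515255574955445642583066505050495249554750504952535547444950475553495147515151475454484450474749,
   574856514849485261485752484846536152565246514942514654535047525151534952544452583953564852404454525048514152424952544944444852534743415450554053406345475156515146584352505046515048505046565846445359525355445245414744375056464548515549505047544951475246554971475247485148445250505058585351425254474853455255515249515350494346464549,
   295253544949484766355048565048445767595046445156536352464447515352515252555044484942494951554752484853523146475052495362504644515243525250504633485960465749435646494544545447515450534748474948495567565439585260464844504950464950515751444848545552354443495454465051525050555150504753596055355253494348534648505447525349534647454948,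
   405646505053494943425050565045484931594450505050455950484759505048535050554849504256524951355346524952484447555048505342494950514656515138525940497340475344555540464342545450525150465350424852545143435047606451394345435054484850495755474550605741474444564271535150495150465050504856535143495050495250495051515347534954504144474951,
   544851524948475447515850505049503041595250484954465854464855514849524950484653565148614754405450495044525455485048525037455146565064434754544738554256543654505046445050485053454048485652505456535242524058404954565056494847544849505046445151505065515650403047485147465050455150505850375451484849485356485254485252415150524950554950,
   505050505050505050505050505050505050505050505050505050505050505050505050505050505050505050505050505050504750505050505050505050505050505050505050505050505050505050605252474851535050505150475050505050505050505050505050504852485150514650555249505050505050505050505050505050505050504852504650505050505050505050505050505050505050505050,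
   444954484951514642573752505253513253414652535469514848534847514949525149554943445656435642544353505050494446495252505247554552504953625544495355494346495349505946594444525253435848504748494947505163524749475353424252475159544740495551474853595748564347456050435153515150404550504356475563505152494447535345544647524851554844514548,
   444742525351514740454748525051485642474852535458494748545550485353465243495647465447505656435440525251486556574448485039575152465255485146466159533959464449474556505647524950495357464652474955524644465359515148444848594948525353514855535052465041554162575841594951504851574950504342515040404548545147494950545248494946455552495652,
   505050505050505050505050505050505050505050505050505050505050505050505050505050505050505050505050505050505050505050505050505050505050505050505050505050505050505050505050505050505050505050505050505050505050505050505050505052474951535050505050505050505050505050505050505050505450505050505050505050505050505050505050505050505050505050]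

/-- The value of the linear form of index `i` at a monomial. -/
def dualCoeff (i : ℕ) (e : Exponent) : ℤ :=
  (dualTable.getD i 0 / 100 ^ e.rank % 100 : ℕ) - 50

/-- The value of the linear form of index `i` at the product of a term list and a monomial. -/
def dualPairing (i : ℕ) (l : TermList) (e : Exponent) : ℤ :=
  (l.map fun t => t.1 * dualCoeff i (e + t.2)).sum

/-- The complex linear form of index `i`. -/
noncomputable def dualForm (i : ℕ) : MvPolynomial (Fin 4) ℂ →ₗ[ℂ] ℂ :=
  (basisMonomials (Fin 4) ℂ).constr ℂ fun s => (dualCoeff i (s 0, s 1, s 2, s 3) : ℂ)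

theorem dualForm_monomial (i : ℕ) (e : Exponent) (z : ℂ) :
    dualForm i (monomial e.toFinsupp z) = z * dualCoeff i e := by
  have h := (basisMonomials (Fin 4) ℂ).constr_basis ℂ
    (fun s => (dualCoeff i (s 0, s 1, s 2, s 3) : ℂ)) e.toFinsupp
  rw [coe_basisMonomials] at h
  have hz : monomial e.toFinsupp z = z • monomial e.toFinsupp (1 : ℂ) := by
    simp [smul_monomial]
  rw [hz, map_smul, dualForm, h]
  rfl

theorem dualForm_monomial_mul_toPoly (i : ℕ) (e : Exponent) (l : TermList) :
    dualForm i (monomial e.toFinsupp 1 * l.toPoly) = dualPairing i l e := by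
  induction l with
  | nil => simp [TermList.toPoly, dualPairing]
  | cons t l ih =>
    simp only [TermList.toPoly, dualPairing, List.map_cons, List.sum_cons, mul_add, map_add,
      Int.cast_add, Int.cast_mul] at ih ⊢
    rw [ih, monomial_mul, ← Exponent.toFinsupp_add, dualForm_monomial, one_mul]

/-- The terms of `x0 * ∂F/∂x0`. -/
def jacobian₀ : TermList :=
  [(5, (5, 0, 0, 0)), (3, (3, 1, 0, 1)), (2, (2, 1, 1, 1)), (2, (2, 0, 2, 1)),
   (1, (1, 0, 3, 1)), (2, (2, 1, 0, 2))]

/-- The terms of `∂F/∂x1`. -/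
def jacobian₁ : TermList :=
  [(1, (0, 0, 4, 0)), (4, (0, 3, 1, 0)), (2, (0, 1, 3, 0)), (1, (3, 0, 0, 1)),
   (1, (2, 0, 1, 1)), (1, (2, 0, 0, 2))]

/-- The terms of `∂F/∂x2`. -/
def jacobian₂ : TermList :=
  [(4, (0, 1, 3, 0)), (1, (0, 4, 0, 0)), (3, (0, 2, 2, 0)), (1, (2, 1, 0, 1)),
   (2, (2, 0, 1, 1)), (3, (1, 0, 2, 1))]

/-- The terms of `x3 * ∂F/∂x3`. -/
def jacobian₃ : TermList :=
  [(5, (0, 0, 0, 5)), (1, (3, 1, 0, 1)), (1, (2, 1, 1, 1)), (1, (2, 0, 2, 1)),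
   (1, (1, 0, 3, 1)), (2, (2, 1, 0, 2))]

/-- The terms of `x0 * x3 * K`. -/
def liftK : TermList :=
  [(1, (3, 1, 0, 1)), (1, (2, 1, 1, 1)), (1, (2, 0, 2, 1)), (1, (1, 0, 3, 1)), (1, (2, 1, 0, 2))]

/-- The monomial `x1 ^ 2 * x2 ^ 3`. -/
def liftQ : TermList := [(1, (0, 2, 3, 0))]

/-- Pairs `(l, e)` such that the products of `l` with the monomial of exponent `e` span the degree 8
part of the ideal `J`. -/
def liftBasis : List (TermList × Exponent) :=
  ([(3, 0, 0, 0), (2, 1, 0, 0), (2, 0, 1, 0), (2, 0, 0, 1), (1, 2, 0, 0), (1, 1, 1, 0),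
     (1, 1, 0, 1), (1, 0, 2, 0), (1, 0, 1, 1), (1, 0, 0, 2), (0, 2, 1, 0), (0, 2, 0, 1),
     (0, 1, 2, 0), (0, 1, 1, 1), (0, 1, 0, 2), (0, 0, 3, 0), (0, 0, 2, 1), (0, 0, 1, 2),
     (0, 0, 0, 3)] :
    List Exponent).map (Prod.mk liftK) ++
  ([(3, 0, 0, 0), (2, 1, 0, 0), (2, 0, 1, 0), (2, 0, 0, 1), (1, 2, 0, 0), (1, 1, 1, 0),
     (1, 1, 0, 1), (1, 0, 2, 0), (1, 0, 1, 1), (1, 0, 0, 2), (0, 2, 0, 1), (0, 1, 1, 1),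
     (0, 1, 0, 2), (0, 0, 2, 1), (0, 0, 1, 2), (0, 0, 0, 3)] :
    List Exponent).map (Prod.mk liftQ)

/-- The polynomial given by the entry of index `j` of `liftBasis`. -/
noncomputable def liftPoly (j : ℕ) : MvPolynomial (Fin 4) ℂ :=
  monomial (liftBasis.getD j ([], 0)).2.toFinsupp 1 * (liftBasis.getD j ([], 0)).1.toPoly

theorem dualPairing_quintic : ∀ l ∈ [jacobian₀, jacobian₃], ∀ i < 35,
    ∀ a < 3 + 1, ∀ b < 3 + 1 - a, ∀ c < 3 + 1 - a - b,
      dualPairing i l (a, b, c, 3 - a - b - c) = 0 := by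
  decide +kernel

theorem dualPairing_quartic : ∀ l ∈ [jacobian₁, jacobian₂], ∀ i < 35,
    ∀ a < 4 + 1, ∀ b < 4 + 1 - a, ∀ c < 4 + 1 - a - b,
      dualPairing i l (a, b, c, 4 - a - b - c) = 0 := by
  decide +kernel

theorem dualPairing_liftBasis : ∀ i < 35, ∀ j < 35,
    dualPairing i (liftBasis.getD j ([], 0)).1 (liftBasis.getD j ([], 0)).2 % 2 =
      if i = j then 1 else 0 := by
  decide +kernel

theorem monomial_mul_mem_ker_dualForm {n i : ℕ} {l : TermList}
    (h : ∀ a < n + 1, ∀ b < n + 1 - a, ∀ c < n + 1 - a - b,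
      dualPairing i l (a, b, c, n - a - b - c) = 0)
    (s : Fin 4 →₀ ℕ) (hs : s.degree = n) :
    monomial s 1 * l.toPoly ∈ LinearMap.ker (dualForm i) := by
  obtain ⟨e, rfl⟩ := Exponent.exists_toFinsupp_eq s
  rw [LinearMap.mem_ker, dualForm_monomial_mul_toPoly,
    Exponent.forall_of_degree_eq (P := fun e => dualPairing i l e = 0) h e
      (e.toFinsupp_degree.symm.trans hs), Int.cast_zero]

theorem monomial_mul_mem_span_liftPoly {n : ℕ} {l : TermList} {e' : Exponent}
    (h : ∀ a < n + 1, ∀ b < n + 1 - a, ∀ c < n + 1 - a - b,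
      liftBasis.contains (l, (a, b, c, n - a - b - c) + e') = true)
    (s : Fin 4 →₀ ℕ) (hs : s.degree = n) :
    monomial s 1 * (monomial e'.toFinsupp 1 * l.toPoly) ∈
      Submodule.span ℂ (Set.range fun j : Fin 35 => liftPoly j) := by
  obtain ⟨e, rfl⟩ := Exponent.exists_toFinsupp_eq s
  obtain ⟨j, hj, hje⟩ := List.getElem_of_mem <| List.contains_iff_mem.1 <|
    Exponent.forall_of_degree_eq (P := fun e => liftBasis.contains (l, e + e') = true) h e
      (e.toFinsupp_degree.symm.trans hs)
  refine Submodule.subset_span ⟨⟨j, hj⟩, ?_⟩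
  simp only [liftPoly, List.getD_eq_getElem _ _ hj, hje]
  rw [Exponent.toFinsupp_add, ← mul_assoc, monomial_mul, one_mul]

/-- The linear forms separate the linear combinations of the polynomials `liftPoly j`. -/
theorem eq_zero_of_dualForm_eq_zero {f : MvPolynomial (Fin 4) ℂ}
    (hf : f ∈ Submodule.span ℂ (Set.range fun j : Fin 35 => liftPoly j))
    (h : ∀ i < 35, dualForm i f = 0) : f = 0 := by
  obtain ⟨b, rfl⟩ := (Submodule.mem_span_range_iff_exists_fun ℂ).1 hf
  let A : Matrix (Fin 35) (Fin 35) ℤ := fun i j =>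
    dualPairing i (liftBasis.getD j ([], 0)).1 (liftBasis.getD j ([], 0)).2
  have hA : (Int.castRingHom (ZMod 2)).mapMatrix A = 1 := by
    ext i j
    have hij := dualPairing_liftBasis i i.2 j j.2
    rw [RingHom.mapMatrix_apply, Matrix.map_apply, Matrix.one_apply, eq_intCast,
      ← ZMod.intCast_mod, Nat.cast_ofNat, hij]
    simp [Fin.ext_iff]
  have hdet : A.det ≠ 0 := fun h0 => by
    have h1 := congrArg Matrix.det hA
    rw [← RingHom.map_det, h0, Matrix.det_one, map_zero] at h1
    exact zero_ne_one h1
  have hdetC : ((Int.castRingHom ℂ).mapMatrix A).det ≠ 0 := by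
    rw [← RingHom.map_det, eq_intCast]
    exact_mod_cast hdet
  have hb : b = 0 := Matrix.eq_zero_of_mulVec_eq_zero hdetC <| by
    ext i
    have hi := h i i.2
    simp only [map_sum, map_smul, liftPoly, dualForm_monomial_mul_toPoly, smul_eq_mul] at hi
    exact (Finset.sum_congr rfl fun j _ => mul_comm _ _).trans hi
  simp [hb]

/-- For the quintic `F = x0⁵ + x1x2⁴ + x2x1⁴ + x3⁵ + x1²x2³ + x0x3·K` with
`K = x0²x1 + x0x1x2 + x0x2² + x2³ + x0x1x3`, the ideals
`I = (x0·∂F/∂x0, ∂F/∂x1, ∂F/∂x2, x3·∂F/∂x3)` and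
`J = (x2³x0x3K, x1x2²x0x3K, x1²x2x0x3K, x0²x3K, x0x3²K, x1²x2³x0, x1²x2³x3)`
satisfy: every homogeneous polynomial of total degree at most 8 in `I ∩ J` is zero. -/
theorem ideal_intersection_no_low_degree (K F : MvPolynomial (Fin 4) ℂ)
    (hK : K = X 0 ^ 2 * X 1 + X 0 * X 1 * X 2 + X 0 * X 2 ^ 2 + X 2 ^ 3 + X 0 * X 1 * X 3)
    (hF : F = X 0 ^ 5 + X 1 * X 2 ^ 4 + X 2 * X 1 ^ 4 + X 3 ^ 5 + X 1 ^ 2 * X 2 ^ 3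
      + X 0 * X 3 * K)
    (I J : Ideal (MvPolynomial (Fin 4) ℂ))
    (hI : I = Ideal.span {X 0 * pderiv 0 F, pderiv 1 F, pderiv 2 F, X 3 * pderiv 3 F})
    (hJ : J = Ideal.span {X 2 ^ 3 * X 0 * X 3 * K, X 1 * X 2 ^ 2 * X 0 * X 3 * K,
      X 1 ^ 2 * X 2 * X 0 * X 3 * K, X 0 ^ 2 * X 3 * K, X 0 * X 3 ^ 2 * K,
      X 1 ^ 2 * X 2 ^ 3 * X 0, X 1 ^ 2 * X 2 ^ 3 * X 3}) :
    ∀ (p : MvPolynomial (Fin 4) ℂ) (n : ℕ), n ≤ 8 → p.IsHomogeneous n →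
      p ∈ I ⊓ J → p = 0 := by
  subst hK hF hI hJ
  intro p n hn hp hpIJ
  set K : MvPolynomial (Fin 4) ℂ :=
    X 0 ^ 2 * X 1 + X 0 * X 1 * X 2 + X 0 * X 2 ^ 2 + X 2 ^ 3 + X 0 * X 1 * X 3 with hK
  have e₀ : X 0 * pderiv 0 (X 0 ^ 5 + X 1 * X 2 ^ 4 + X 2 * X 1 ^ 4 + X 3 ^ 5 + X 1 ^ 2 * X 2 ^ 3
      + X 0 * X 3 * K) = jacobian₀.toPoly := by
    simp [hK, jacobian₀, TermList.toPoly, Exponent.monomial_toFinsupp, pderiv_X]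
    ring
  have e₁ : pderiv 1 (X 0 ^ 5 + X 1 * X 2 ^ 4 + X 2 * X 1 ^ 4 + X 3 ^ 5 + X 1 ^ 2 * X 2 ^ 3
      + X 0 * X 3 * K) = jacobian₁.toPoly := by
    simp [hK, jacobian₁, TermList.toPoly, Exponent.monomial_toFinsupp, pderiv_X]
    ring
  have e₂ : pderiv 2 (X 0 ^ 5 + X 1 * X 2 ^ 4 + X 2 * X 1 ^ 4 + X 3 ^ 5 + X 1 ^ 2 * X 2 ^ 3
      + X 0 * X 3 * K) = jacobian₂.toPoly := by
    simp [hK, jacobian₂, TermList.toPoly, Exponent.monomial_toFinsupp, pderiv_X]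
    ring
  have e₃ : X 3 * pderiv 3 (X 0 ^ 5 + X 1 * X 2 ^ 4 + X 2 * X 1 ^ 4 + X 3 ^ 5 + X 1 ^ 2 * X 2 ^ 3
      + X 0 * X 3 * K) = jacobian₃.toPoly := by
    simp [hK, jacobian₃, TermList.toPoly, Exponent.monomial_toFinsupp, pderiv_X]
    ring
  have f₁ : X 2 ^ 3 * X 0 * X 3 * K =
      monomial (Exponent.toFinsupp (0, 0, 3, 0)) 1 * liftK.toPoly := by
    simp [hK, liftK, TermList.toPoly, Exponent.monomial_toFinsupp]
    ring
  have f₂ : X 1 * X 2 ^ 2 * X 0 * X 3 * K =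
      monomial (Exponent.toFinsupp (0, 1, 2, 0)) 1 * liftK.toPoly := by
    simp [hK, liftK, TermList.toPoly, Exponent.monomial_toFinsupp]
    ring
  have f₃ : X 1 ^ 2 * X 2 * X 0 * X 3 * K =
      monomial (Exponent.toFinsupp (0, 2, 1, 0)) 1 * liftK.toPoly := by
    simp [hK, liftK, TermList.toPoly, Exponent.monomial_toFinsupp]
    ring
  have f₄ : X 0 ^ 2 * X 3 * K = monomial (Exponent.toFinsupp (1, 0, 0, 0)) 1 * liftK.toPoly := by
    simp [hK, liftK, TermList.toPoly, Exponent.monomial_toFinsupp]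
    ring
  have f₅ : X 0 * X 3 ^ 2 * K = monomial (Exponent.toFinsupp (0, 0, 0, 1)) 1 * liftK.toPoly := by
    simp [hK, liftK, TermList.toPoly, Exponent.monomial_toFinsupp]
    ring
  have f₆ : X 1 ^ 2 * X 2 ^ 3 * X 0 =
      monomial (Exponent.toFinsupp (1, 0, 0, 0)) 1 * liftQ.toPoly := by
    simp [liftQ, TermList.toPoly, Exponent.monomial_toFinsupp]
    ring
  have f₇ : X 1 ^ 2 * X 2 ^ 3 * X 3 =
      monomial (Exponent.toFinsupp (0, 0, 0, 1)) 1 * liftQ.toPoly := by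
    simp [liftQ, TermList.toPoly, Exponent.monomial_toFinsupp]
    ring
  rw [e₀, e₁, e₂, e₃, f₁, f₂, f₃, f₄, f₅, f₆, f₇] at hpIJ
  have hq := Ideal.mul_mem_left _ (X 0 ^ (8 - n)) hpIJ
  have hq8 : homogeneousComponent 8 (X 0 ^ (8 - n) * p) = X 0 ^ (8 - n) * p := by
    have h := (isHomogeneous_X_pow (R := ℂ) (0 : Fin 4) (8 - n)).mul hp
    rw [Nat.sub_add_cancel hn] at h
    rw [homogeneousComponent_of_mem h, if_pos rfl]
  suffices h : X 0 ^ (8 - n) * p = 0 from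
    (mul_eq_zero.1 h).resolve_left (pow_ne_zero _ (X_ne_zero 0))
  refine eq_zero_of_dualForm_eq_zero ?_ fun i hi => ?_
  · rw [← hq8]
    refine homogeneousComponent_mem_of_mem_ideal_span ?_ hq.2
    have hdeg (m : ℕ) (e : Exponent) (l : TermList) (hm : e.degree = m) (k : ℕ)
        (hl : ∀ t ∈ l, t.2.degree = k) :
        (monomial e.toFinsupp (1 : ℂ) * l.toPoly).IsHomogeneous (m + k) :=
      (isHomogeneous_monomial 1 (e.toFinsupp_degree.trans hm)).mul
        (TermList.isHomogeneous_toPoly hl)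
    rintro g (rfl | rfl | rfl | rfl | rfl | rfl | rfl)
    · exact ⟨8, hdeg 3 _ _ rfl 5 (by decide), fun s hs => monomial_mul_mem_span_liftPoly
        (n := 0) (by decide +kernel) s (by omega)⟩
    · exact ⟨8, hdeg 3 _ _ rfl 5 (by decide), fun s hs => monomial_mul_mem_span_liftPoly
        (n := 0) (by decide +kernel) s (by omega)⟩
    · exact ⟨8, hdeg 3 _ _ rfl 5 (by decide), fun s hs => monomial_mul_mem_span_liftPoly
        (n := 0) (by decide +kernel) s (by omega)⟩
    · exact ⟨6, hdeg 1 _ _ rfl 5 (by decide), fun s hs => monomial_mul_mem_span_liftPoly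
        (n := 2) (by decide +kernel) s (by omega)⟩
    · exact ⟨6, hdeg 1 _ _ rfl 5 (by decide), fun s hs => monomial_mul_mem_span_liftPoly
        (n := 2) (by decide +kernel) s (by omega)⟩
    · exact ⟨6, hdeg 1 _ _ rfl 5 (by decide), fun s hs => monomial_mul_mem_span_liftPoly
        (n := 2) (by decide +kernel) s (by omega)⟩
    · exact ⟨6, hdeg 1 _ _ rfl 5 (by decide), fun s hs => monomial_mul_mem_span_liftPoly
        (n := 2) (by decide +kernel) s (by omega)⟩
  · rw [← hq8, ← LinearMap.mem_ker]
    refine homogeneousComponent_mem_of_mem_ideal_span ?_ hq.1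
    rintro g (rfl | rfl | rfl | rfl)
    · exact ⟨5, TermList.isHomogeneous_toPoly (by decide), fun s hs => monomial_mul_mem_ker_dualForm
        (dualPairing_quintic jacobian₀ (by decide) i hi) s (by omega)⟩
    · exact ⟨4, TermList.isHomogeneous_toPoly (by decide), fun s hs => monomial_mul_mem_ker_dualForm
        (dualPairing_quartic jacobian₁ (by decide) i hi) s (by omega)⟩
    · exact ⟨4, TermList.isHomogeneous_toPoly (by decide), fun s hs => monomial_mul_mem_ker_dualForm
        (dualPairing_quartic jacobian₂ (by decide) i hi) s (by omega)⟩
    · exact ⟨5, TermList.isHomogeneous_toPoly (by decide), fun s hs => monomial_mul_mem_ker_dualForm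
        (dualPairing_quintic jacobian₃ (by decide) i hi) s (by omega)⟩
end

section
/- Let a ∈ ℂ satisfy a² − a + 1 = 0. In ℂ[w,x,y,z] let K = w²x + wxy + wy² + y³ + wxz, f = w⁵ + z⁵ + xy⁴ + x⁴y + zw·K, P = (a+1)·y³ + a·(a+1)·x²y, and N = zw·K. Then the product N·P·K does not belong to the ideal of ℂ[w,x,y,z] generated by the four partial derivatives ∂f/∂w, ∂f/∂x, ∂f/∂y, ∂f/∂z. -/
open MvPolynomial

/-- Values on the monomials `w ^ i * x ^ j * y ^ k * z ^ (11 - i - j - k)` (entry `[i][j][k]`) of an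
integral linear functional on quaternary forms of degree `11`. -/
def functionalTable : List (List (List ℤ)) :=
  [
   [
    [23337198905086381236275923, -209207470494921629840196, -8586857717593411353654238,
     21402690378498930234190335, -16392839293189869535496048, 21366396691361818346760894,
     16052843323769113784616204, 7560379582548456341395118, 116776459103108460659348460,
     23562982845090005677969989, -39527565096231709664928386, 149693064949101661185417613],
    [-36356566025567384237085312, -7504853156573496836951819, 529843227952224886390238,
     -10832255352677430027858497, -8272031486363326952182064, 5963651697533408996131658,
     4923410914236603378533873, 57134707044199352113169752, -50216091061305595205733500,
     42396258501976076763536206, 62861171898553599520627169],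
    [36206295513004092565992565, 5409527760659294011101452, -6446202678990341170509106,
     4181380772840826316045025, -14696744768827812025247780, 9362550885501902867644317,
     10628002036981609761662364, -34825424162049616831148269, -3017106049193931681188466,
     76276468232698011478084751],
    [-37046636805666449112388421, -19428610342189746064630069, -10052221191074596073780326,
     -4443236942969836388009264, -3106210970020445762337796, -22698179405423862308711753,
     2617103127222897818225893, -15968633841853213952985834, -29963228396275902453446812],
    [45226784133366050923272795, 19525334293068332569293764, -8050980744658319205160590,
     -3874335643249036059351852, -12669469224601345864249546, 10399740045557692125373471,
     -5298427676644002755459108, 3207168708951005263194145],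
    [-27989525802495803835591332, -28282144270947528521483242, -11069395059404728091230604,
     -6179029908833398606832030, 7968206109629526154944877, -8012207581111205269639364,
     -43483090141703460131147489],
    [61635976937408788615093437, 27323971395973364982419235, 11014282908901782531098390,
     -6115709965124029871071797, 14286104052502190411369770, 7222687548462172139900418],
    [100587886409742131122690969, -39129624349792818797079141, -22780822710269776743959861,
     -6681623261980824044444729, -10403545364346632021515432],
    [62908180698540983564997791, 27996591166828370855491754, 17441158704240140211459560,
     15978851069884564317745125],
    [303546584301331589030950471, -74705991207659213550246981, -32957490744651053787911854],
    [133483933987667111643787349, 46057299322082795974958962],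
    [535476452830535768945201840]],
   [
    [4637785402391991707388471, -5469871482931916403566758, 10322905056564256704808505,
     4170700674946229886242761, -671879201871430791766198, -16746754416853105715606491,
     -53891952539945908688188844, 51598397418037360487701932, 25250145824015883337995783,
     -108653955853498069567319120, 58539234645605164797298515],
    [-59205829742810349122023550, -21155890829335254411620425, 169215566983394160384525,
     7944431251390045620968555, 3166674293921138485884758, -19992339454898021389935604,
     35392541306376327934556989, -583764728803939712340727, -12456916105390188079549745,
     -89155940639469213120327878],
    [-9439566236562290883126555, 4290375515091425907678744, 1728014550370044113624397,
     8971225503517097981499305, 18990088761298474492388443, -5946486919701096419342820,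
     -1293834101719419448333723, 13158877061775572134133805, 70574134672661274128341999],
    [-108870168784421824398809340, -29285945031440296233612562, -4734768684045584982008432,
     14765736091447259757623175, -9914023111005674153066003, -3032255038977601890371427,
     -7811784810518154695182210, -57185304333046517164358961],
    [-41216361756075585794688329, 2100300846081800479440186, 5983719027804717697096078,
     -8293015551455754260657413, 4680906175563831337703703, 22353953361379758882085586,
     15908098016224037958909939],
    [-215204169529834873835556400, -59299624527769289586460569, -16295562191501852819820454,
     3931572197048802405606346, -3188532895205176085766974, -30205316920596593127661139],
    [-96657961124810315979303704, -3757423847291876670621400, 4919029707865642185229515,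
     13511915703465008701811477, 30161528063528182922204414],
    [-151915254600532128783867120, -95656736951532932678646936, -40131289357655731166878283,
     -8024911987778232938100880],
    [-163219576638819471117463629, -37008694005547158940020168, 16511233579719777823629185],
    [-415125736829428224098682417, -178894659504166175737726732],
    [-262869468255866451884855881]],
   [
    [26766603212330990146422499, 10708318815351092473770559, 3255726008583153131176056,
     -19061592337133808201897621, 24771915111654029625276352, -31541794220308654268074392,
     12858581060578188473252838, -120831851309821139618049536, 102452927152675796294215842,
     153394533518546907849202582],
    [-54283115523051285873805440, -5460762389620020681645903, 24335196234406591999727794,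
     -15122874986446119558516871, 8890087108258972012285854, 9952269824396230287949057,
     1626658816334324923426007, -133595843048022787232177145, 21226351353521779187242995],
    [21677880789422357453549463, 14565437123275455760113109, -5635081391474059719967196,
     5863865909083079705417678, 5251326970647496790079118, 18578608331630101284563395,
     42939651623127552921812010, -45484269666222135101660530],
    [-78177947063190486924155790, -30542641243494756437631574, 11080436610732083815747937,
     2984104274040734276038449, 16312716956808721176447945, -12725708394940384572138605,
     -31469076260134683921203811],
    [-9800955297619719063995117, 23349419752392255349711926, 4955723312974562149587088,
     4346665171872198384499552, 46461641749977844198562692, 6876910332005976319471302],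
    [-102842057651406052928381757, -44901815576928336992473199, -8128377250231209915012317,
     -2031634087165688836537311, 6174191587144565338699463],
    [-140393426712473237102255523, 22023612906966464517973497, 17695607410749271158685726,
     12190082747072762119302003],
    [-165561755877273671057643972, -80370079796589836311703117, -24887014193043234962999756],
    [-318257829443927160092141257, 17611572623654358726571273],
    [-181874642465736507412354706]],
   [
    [56632358634266771173823266, 4878443249002320343413795, 17525970776660886838142417,
     -845858476986894715422665, -19213862372758386781703408, -15348182194251131156052007,
     211375370712887516621668420, -11461227206852708047796671, 41283178937029644145706834],
    [-10085427773238696769541649, 7365837436313296506428811, 1361610410799068417662612,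
     -224042267606821109940551, -10225226053580375595995295, -32781476436130620953074838,
     56279337497330841735347389, -3770331334370559076365392],
    [91582003939920112897518176, 25984673620315613457132186, 13859333080742964680215274,
     -8162593156199064284128035, 11236001071361154685103409, 36137632379358174840129800,
     2917501134731446298452028],
    [2530913692812229194448220, -1896747597420595193798170, 7781195848500403574274909,
     -60472603599005003144979640, -2514530359441122710464200, -14982126383933200299422033],
    [155639502169000084766849301, 52418407730154597351166959, 22722532239720538399151384,
     -12401294173414519760194661, 4385241611321765180655066],
    [27789302451391380343943063, -8722234408689808668713360, -10272302800437898388283383,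
     -5524253544798021647246822],
    [402907674583641436373900180, 84888055112426307335087775, 31796803061904363808441241],
    [72106183749878955491026673, 6655705995755137632803398],
    [148876580396310773745357032]],
   [
    [56304857444363524208979385, 13281415127372238462084007, -21851104125517122465023608,
     8117415875730617621688153, 21440918898904042161245340, -56126093423065697117568453,
     -29712160819453904713734420, 136740873523136893215975801],
    [-8848287341322940140532664, -12669984503433214322540131, -3358047243745558199649398,
     -7690591652264188932538239, -33952194850417850899722466, 2025687513372840502415571,
     -34006293416138132948294582],
    [100641731789542957498803471, 31284728984649929561277176, -20129194611019690570178900,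
     -3478153396116958192041283, 2873499559005768857069348, 7312911361891090860088789],
    [24309552404781546834901553, -22528312043564775231023372, 6455529747162719458641033,
     -473673962620088669014855, -32372488172186237938383280],
    [169888131731413217258867781, 63030264099368030035109203, 5870311868582875154536858,
     -6960131077661140227755775],
    [132156240874692240170617943, -16845080189154811109858858, -15111887936677511561793170],
    [197621380257068776319714559, 94275271309742925762233413],
    [288434846319561405353918532]],
   [
    [27812377290589233454186552, -4210263224474796991977755, -11061309906954620734071179,
     26022648707951595129324263, -16864919048752603049338309, 58320025764511429666915535,
     -230308496093824721930491],
    [-80769494273071838948060763, -13747131329115706364107880, -7964680607813371329236578,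
     -10607937449206549729812918, -16807485344500674067821308, 9639837030769185922152765],
    [42429474562872964119733031, 2779366295664499384387597, -11205767267328148813442583,
     21392157154755063081834613, -19733721270688796610996781],
    [-106188408945891350852220114, -41983938951654644290221960, -23273110512698995345630379,
     -6229905944611520409216217],
    [42100281605600253754272792, 23770570472216058342881661, -12828061157045590922252313],
    [-191931642767299429305743640, -65370160980634767919948035],
    [45328397914625319449286246]],
   [
    [3198738696326331094687291, -505028068321065414998695, 15553704882135521562997056,
     12361618985418206809667517, -22809780117055669565595928, -26520651480297868654082863],
    [-104931779264850468496503898, -36396840585822454950186240, 11898457253347158364480751,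
     13644787682790722151379354, -16466119505018972372038419],
    [-21555904295139383514370597, 13377979794057068142058718, 8993123157033726022143230,
     2436074684581723023172127],
    [-188865342192718111487444826, -46948036399330615298490592, -4099728524907606549691403],
    [-96878917672158627809023111, 13373052316514208553079338],
    [-309175872095060066152803102]],
   [
    [65978618647349793083159552, 15255297620600363135005960, 3691532802380531017129267,
     3197240297245521293485730, 37032203910670512094668645],
    [-76840241696381345794024208, -1008551655229044534857514, 36303572790644813343457577,
     -24659575262823866663147700],
    [72684745698695790954677963, 30763537433728161222881943, 3194197694328402380674057],
    [-108915218474736738324614954, -41130197013573737071888639],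
    [69166655473414439849366739]],
   [
    [103566758587421023992060637, 15825585863303657563470754, 18261159174913854048180362,
     -14606281634105334695793252],
    [-426003192753168974823614, 6377386461997408958256424, -3152573214065299793997341],
    [177766082060803916113229015, 45140078851636646029287576],
    [41182988769772267718607208]],
   [
    [91209581263653449204026905, 8832820541710783241197359, -34539534754922058319563324],
    [-42977473030282101823711743, -29502981644889368446397425],
    [151798801827897030683918925]],
   [
    [27446182338260203747661647, -14661380426851827502668986],
    [-165289349142268000306620273]],
   [
    [15462018781056919222884631]]]

/-- Value of the functional on the monomial with exponents `i, j, k, l`; it vanishes outside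
degree `11`. -/
def functionalCoeff (i j k l : ℕ) : ℤ :=
  if i + j + k + l = 11 then ((functionalTable.getD i []).getD j []).getD k 0 else 0

/-- The linear functional on polynomials with values `functionalCoeff` on monomials. -/
noncomputable def functional : MvPolynomial (Fin 4) ℂ →ₗ[ℂ] ℂ :=
  (basisMonomials (Fin 4) ℂ).constr ℂ fun m => (functionalCoeff (m 0) (m 1) (m 2) (m 3) : ℂ)

lemma functional_monomial (m : Fin 4 →₀ ℕ) (r : ℂ) :
    functional (monomial m r) = r * functionalCoeff (m 0) (m 1) (m 2) (m 3) := by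
  have h := (basisMonomials (Fin 4) ℂ).constr_basis ℂ
    (fun m => (functionalCoeff (m 0) (m 1) (m 2) (m 3) : ℂ)) m
  rw [coe_basisMonomials] at h
  have hr : monomial m r = r • monomial m (1 : ℂ) := by simp [smul_monomial]
  rw [hr, map_smul, functional, h, smul_eq_mul]

/-- The polynomial given by a list of coefficients and exponents. -/
noncomputable def termsPoly (g : List (ℤ × ℕ × ℕ × ℕ × ℕ)) : MvPolynomial (Fin 4) ℂ :=
  (g.map fun t => C (t.1 : ℂ) *
    (X 0 ^ t.2.1 * X 1 ^ t.2.2.1 * X 2 ^ t.2.2.2.1 * X 3 ^ t.2.2.2.2)).sum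

/-- Value of the functional on `w ^ i * x ^ j * y ^ k * z ^ l * termsPoly g`. -/
def shiftedSum (g : List (ℤ × ℕ × ℕ × ℕ × ℕ)) (i j k l : ℕ) : ℤ :=
  (g.map fun t => t.1 *
    functionalCoeff (i + t.2.1) (j + t.2.2.1) (k + t.2.2.2.1) (l + t.2.2.2.2)).sum

lemma functional_monomial_mul_term (m : Fin 4 →₀ ℕ) (r s : ℂ) (i j k l : ℕ) :
    functional (monomial m r * (C s * (X 0 ^ i * X 1 ^ j * X 2 ^ k * X 3 ^ l))) =
      r * (s * functionalCoeff (m 0 + i) (m 1 + j) (m 2 + k) (m 3 + l)) := by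
  have h : monomial m r * (C s * (X 0 ^ i * X 1 ^ j * X 2 ^ k * X 3 ^ l)) =
      monomial (m + (Finsupp.single 0 i + Finsupp.single 1 j + Finsupp.single 2 k +
        Finsupp.single 3 l)) (r * s) := by
    simp only [X_pow_eq_monomial, C_mul_monomial, monomial_mul, mul_one]
  rw [h, functional_monomial]
  simp [mul_assoc]

lemma functional_monomial_mul_termsPoly (m : Fin 4 →₀ ℕ) (r : ℂ)
    (g : List (ℤ × ℕ × ℕ × ℕ × ℕ)) :
    functional (monomial m r * termsPoly g) =
      r * shiftedSum g (m 0) (m 1) (m 2) (m 3) := by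
  induction g with
  | nil => simp [termsPoly, shiftedSum]
  | cons t g ih =>
    simp only [termsPoly, shiftedSum, List.map_cons, List.sum_cons, mul_add, map_add,
      functional_monomial_mul_term, Int.cast_add, Int.cast_mul] at ih ⊢
    rw [ih]

lemma functional_termsPoly (g : List (ℤ × ℕ × ℕ × ℕ × ℕ)) :
    functional (termsPoly g) = shiftedSum g 0 0 0 0 := by
  simpa [← C_apply] using functional_monomial_mul_termsPoly 0 1 g

/-- The functional kills all multiples of a quartic form once it kills those in degree `11`. -/
lemma functional_mul_termsPoly_eq_zero (g : List (ℤ × ℕ × ℕ × ℕ × ℕ))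
    (hdeg : ∀ t ∈ g, t.2.1 + t.2.2.1 + t.2.2.2.1 + t.2.2.2.2 = 4)
    (hg : ∀ i < 8, ∀ j < 8 - i, ∀ k < 8 - i - j, shiftedSum g i j k (7 - i - j - k) = 0)
    (p : MvPolynomial (Fin 4) ℂ) : functional (p * termsPoly g) = 0 := by
  have key (i j k l : ℕ) : shiftedSum g i j k l = 0 := by
    by_cases h : i + j + k + l = 7
    · obtain rfl : l = 7 - i - j - k := by omega
      exact hg i (by omega) j (by omega) k (by omega)
    · refine List.sum_eq_zero fun x hx => ?_
      obtain ⟨t, ht, rfl⟩ := List.mem_map.1 hx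
      have := hdeg t ht
      rw [functionalCoeff, if_neg (by omega), mul_zero]
  induction p using MvPolynomial.induction_on' with
  | monomial m r => rw [functional_monomial_mul_termsPoly, key, Int.cast_zero, mul_zero]
  | add p q hp hq => rw [add_mul, map_add, hp, hq, add_zero]

/-- The terms of the partial derivative of `f` with respect to `w`. -/
def partialTermsW : List (ℤ × ℕ × ℕ × ℕ × ℕ) :=
  [(5, 4, 0, 0, 0), (3, 2, 1, 0, 1), (2, 1, 1, 1, 1), (2, 1, 0, 2, 1), (1, 0, 0, 3, 1),
   (2, 1, 1, 0, 2)]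

/-- The terms of the partial derivative of `f` with respect to `x`. -/
def partialTermsX : List (ℤ × ℕ × ℕ × ℕ × ℕ) :=
  [(1, 0, 0, 4, 0), (4, 0, 3, 1, 0), (1, 3, 0, 0, 1), (1, 2, 0, 1, 1), (1, 2, 0, 0, 2)]

/-- The terms of the partial derivative of `f` with respect to `y`. -/
def partialTermsY : List (ℤ × ℕ × ℕ × ℕ × ℕ) :=
  [(4, 0, 1, 3, 0), (1, 0, 4, 0, 0), (1, 2, 1, 0, 1), (2, 2, 0, 1, 1), (3, 1, 0, 2, 1)]

/-- The terms of the partial derivative of `f` with respect to `z`. -/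
def partialTermsZ : List (ℤ × ℕ × ℕ × ℕ × ℕ) :=
  [(5, 0, 0, 0, 4), (1, 3, 1, 0, 0), (1, 2, 1, 1, 0), (1, 2, 0, 2, 0), (1, 1, 0, 3, 0),
   (2, 2, 1, 0, 1)]

/-- The terms of `z * w * K ^ 2 * y ^ 3`. -/
def cubicTerms : List (ℤ × ℕ × ℕ × ℕ × ℕ) :=
  [(1, 5, 2, 3, 1), (2, 4, 2, 4, 1), (2, 4, 1, 5, 1), (4, 3, 1, 6, 1), (2, 4, 2, 3, 2),
   (1, 3, 2, 5, 1), (2, 2, 1, 7, 1), (2, 3, 2, 4, 2), (1, 3, 0, 7, 1), (2, 2, 0, 8, 1),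
   (2, 3, 1, 5, 2), (1, 1, 0, 9, 1), (2, 2, 1, 6, 2), (1, 3, 2, 3, 3)]

/-- The terms of `z * w * K ^ 2 * x ^ 2 * y`. -/
def mixedTerms : List (ℤ × ℕ × ℕ × ℕ × ℕ) :=
  [(1, 5, 4, 1, 1), (2, 4, 4, 2, 1), (2, 4, 3, 3, 1), (4, 3, 3, 4, 1), (2, 4, 4, 1, 2),
   (1, 3, 4, 3, 1), (2, 2, 3, 5, 1), (2, 3, 4, 2, 2), (1, 3, 2, 5, 1), (2, 2, 2, 6, 1),
   (2, 3, 3, 3, 2), (1, 1, 2, 7, 1), (2, 2, 3, 4, 2), (1, 3, 4, 1, 3)]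

/-- With `w = X 0`, `x = X 1`, `y = X 2`, `z = X 3`: if `a² − a + 1 = 0`,
`K = w²x + wxy + wy² + y³ + wxz`, `f = w⁵ + z⁵ + xy⁴ + x⁴y + zw·K`,
`P = (a+1)y³ + a(a+1)x²y` and `N = zw·K`, then `N·P·K` is not in the Jacobian ideal
of `f`. -/
theorem NPK_not_in_jacobian_ideal (a : ℂ) (ha : a ^ 2 - a + 1 = 0)
    (K f P N : MvPolynomial (Fin 4) ℂ)
    (hK : K = X 0 ^ 2 * X 1 + X 0 * X 1 * X 2 + X 0 * X 2 ^ 2 + X 2 ^ 3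
      + X 0 * X 1 * X 3)
    (hf : f = X 0 ^ 5 + X 3 ^ 5 + X 1 * X 2 ^ 4 + X 1 ^ 4 * X 2 + X 3 * X 0 * K)
    (hP : P = C (a + 1) * X 2 ^ 3 + C (a * (a + 1)) * X 1 ^ 2 * X 2)
    (hN : N = X 3 * X 0 * K) :
    N * P * K ∉ Ideal.span {pderiv 0 f, pderiv 1 f, pderiv 2 f, pderiv 3 f} := by
  have hw : pderiv 0 f = termsPoly partialTermsW := by
    subst hf hK
    simp [termsPoly, partialTermsW, pderiv_X, Derivation.leibniz_pow]
    ring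
  have hx : pderiv 1 f = termsPoly partialTermsX := by
    subst hf hK
    simp [termsPoly, partialTermsX, pderiv_X, Derivation.leibniz_pow]
    ring
  have hy : pderiv 2 f = termsPoly partialTermsY := by
    subst hf hK
    simp [termsPoly, partialTermsY, pderiv_X, Derivation.leibniz_pow]
    ring
  have hz : pderiv 3 f = termsPoly partialTermsZ := by
    subst hf hK
    simp [termsPoly, partialTermsZ, pderiv_X, Derivation.leibniz_pow]
    ring
  have hNPK : N * P * K =
      (a + 1) • termsPoly cubicTerms + (a * (a + 1)) • termsPoly mixedTerms := by
    subst hN hP hK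
    simp only [smul_eq_C_mul]
    simp [termsPoly, cubicTerms, mixedTerms]
    ring
  intro hmem
  have hzero : functional (N * P * K) = 0 := by
    suffices h : ∀ r, functional (r * (N * P * K)) = 0 by simpa using h 1
    refine Submodule.span_induction (p := fun q _ => ∀ r, functional (r * q) = 0) ?_ (by simp)
      (fun q₁ q₂ _ _ h₁ h₂ r => by rw [mul_add, map_add, h₁, h₂, add_zero])
      (fun s q _ h r => by rw [smul_eq_mul, ← mul_assoc, h]) hmem
    rintro q (rfl | rfl | rfl | rfl) r
    · rw [hw]
      exact functional_mul_termsPoly_eq_zero _ (by decide) (by decide +kernel) r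
    · rw [hx]
      exact functional_mul_termsPoly_eq_zero _ (by decide) (by decide +kernel) r
    · rw [hy]
      exact functional_mul_termsPoly_eq_zero _ (by decide) (by decide +kernel) r
    · rw [hz]
      exact functional_mul_termsPoly_eq_zero _ (by decide) (by decide +kernel) r
  have hcubic : shiftedSum cubicTerms 0 0 0 0 = 55087965771845800733983965 := by decide +kernel
  have hmixed : shiftedSum mixedTerms 0 0 0 0 = 257433053694409874668109364 := by decide +kernel
  rw [hNPK, map_add, map_smul, map_smul, functional_termsPoly, functional_termsPoly, hcubic,
    hmixed, smul_eq_mul, smul_eq_mul] at hzero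
  push_cast at hzero
  have hnorm : (3 * (55087965771845800733983965 ^ 2 + 55087965771845800733983965 *
      257433053694409874668109364 + 257433053694409874668109364 ^ 2) : ℂ) = 0 := by
    linear_combination (2 - a) * (55087965771845800733983965 +
      (1 - a) * 257433053694409874668109364) * hzero +
      (55087965771845800733983965 ^ 2 + 55087965771845800733983965 *
        257433053694409874668109364 + 257433053694409874668109364 ^ 2 +
        257433053694409874668109364 ^ 2 * (3 - (a ^ 2 - a + 1))) * ha
  norm_num at hnorm
end
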